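/- arXiv:1106.0518 — 4 statements merged into one kernel-verified Lean document; each statement's English description precedes it below -/
import Mathlib

section
/- Let f : 2^[n] → ℝ be a non-negative submodular function, and consider the uniform distribution over subsets of [n]. Then for all ρ ∈ [0,1], the noise stability satisfies Stab_ρ(f) ≥ ρ · ‖f‖₂², where Stab_ρ(f) = 2^{-n} Σ_{X⊆[n]} f(X)·T_ρf(X) and ‖f‖₂² = 2^{-n} Σ_{X⊆[n]} f(X)². -/
lemma fmv_aux {α : Type*} [DecidableEq α] (p : ℝ) (hp0 : 0 ≤ p) (hp1 : p ≤ 1) (A : Finset α) :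
    ∀ g : Finset α → ℝ, (∀ S T, g (S ∪ T) + g (S ∩ T) ≤ g S + g T) →
    (1 - p) * g ∅ + p * g A ≤
      ∑ S ∈ A.powerset, p ^ S.card * (1 - p) ^ (A.card - S.card) * g S := by
  induction A using Finset.induction_on with
  | empty => intro g _; simp; linarith
  | insert a A ha ih =>
    intro g hg
    have key := ih (fun S => (1 - p) * g S + p * g (insert a S)) (by
      intro S T
      have h1 := hg S T
      have h2 := hg (insert a S) (insert a T)
      rw [← Finset.insert_union_distrib, ← Finset.insert_inter_distrib] at h2
      have h3 := mul_le_mul_of_nonneg_left h1 (sub_nonneg.2 hp1)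
      have h4 := mul_le_mul_of_nonneg_left h2 hp0
      linarith)
    have hsum : ∑ S ∈ (insert a A).powerset,
          p ^ S.card * (1 - p) ^ ((insert a A).card - S.card) * g S
        = ∑ S ∈ A.powerset, p ^ S.card * (1 - p) ^ (A.card - S.card) *
            ((1 - p) * g S + p * g (insert a S)) := by
      rw [Finset.sum_powerset_insert ha, ← Finset.sum_add_distrib]
      refine Finset.sum_congr rfl fun S hS => ?_
      have hSA := Finset.mem_powerset.1 hS
      have hc := Finset.card_le_card hSA
      have haS : a ∉ S := fun h => ha (hSA h)
      rw [Finset.card_insert_of_notMem ha, Finset.card_insert_of_notMem haS,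
        Nat.add_sub_add_right, Nat.sub_add_comm hc]
      ring
    rw [hsum]
    refine le_trans ?_ key
    have h := hg A {a}
    rw [Finset.inter_singleton_of_notMem ha, Finset.union_comm, ← Finset.insert_eq] at h
    have h5 := mul_le_mul_of_nonneg_left h (mul_nonneg hp0 (sub_nonneg.2 hp1))
    simp only [insert_empty_eq]
    nlinarith

lemma pointwise_aux {n : ℕ} (f : Finset (Fin n) → ℝ) (hf0 : ∀ S, 0 ≤ f S)
    (hsub : ∀ S T : Finset (Fin n), f (S ∪ T) + f (S ∩ T) ≤ f S + f T)
    (p : ℝ) (hp0 : 0 ≤ p) (hp1 : p ≤ 1) (X : Finset (Fin n)) :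
    p * p * f X ≤ ∑ Y : Finset (Fin n),
      p ^ (n - (symmDiff X Y).card) * (1 - p) ^ ((symmDiff X Y).card) * f Y := by
  have hq0 := sub_nonneg.2 hp1
  have hsplit : ∑ Y : Finset (Fin n),
      p ^ (n - (symmDiff X Y).card) * (1 - p) ^ ((symmDiff X Y).card) * f Y
      = ∑ T ∈ Xᶜ.powerset, (1 - p) ^ T.card * (1 - (1 - p)) ^ (Xᶜ.card - T.card) *
        ∑ S ∈ X.powerset, p ^ S.card * (1 - p) ^ (X.card - S.card) * f (S ∪ T) := by
    simp_rw [Finset.mul_sum]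
    rw [← Finset.sum_product']
    refine Finset.sum_nbij' (fun Y => (Y \ X, Y ∩ X)) (fun P => P.2 ∪ P.1) ?_ ?_ ?_ ?_ ?_
    · intro Y _
      simp only [Finset.mem_product, Finset.mem_powerset]
      exact ⟨fun x hx => by simp at hx ⊢; exact hx.2, Finset.inter_subset_right⟩
    · intro P _; simp
    · intro Y _; ext x; simp; tauto
    · rintro ⟨T, S⟩ h
      simp only [Finset.mem_product, Finset.mem_powerset] at h
      obtain ⟨hT, hS⟩ := h
      simp only [Prod.mk.injEq]
      constructor <;> ext x <;> have h1 := @hT x <;> have h2 := @hS x <;> simp at * <;> tauto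
    · intro Y _
      have e : (Y ∩ X) ∪ (Y \ X) = Y := by ext x; simp; tauto
      have c1 : (symmDiff X Y).card = (X \ Y).card + (Y \ X).card := by
        rw [symmDiff_def]
        exact Finset.card_union_of_disjoint disjoint_sdiff_sdiff
      have c2 := Finset.card_sdiff_add_card_inter X Y
      rw [Finset.inter_comm] at c2
      have c3 : X.card + Xᶜ.card = n := by simpa using Finset.card_add_card_compl X
      have c4 : (Y \ X).card ≤ Xᶜ.card := Finset.card_le_card (fun x hx => by
        simp at hx ⊢; exact hx.2)
      simp only [e]
      have c5 : n - (symmDiff X Y).card = (Y ∩ X).card + (Xᶜ.card - (Y \ X).card) := by omega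
      have c6 : X.card - (Y ∩ X).card = (X \ Y).card := by omega
      rw [c5, c6, c1, pow_add, pow_add, sub_sub_cancel]
      ring
  rw [hsplit]
  have hin : ∀ T : Finset (Fin n), p * f (X ∪ T) ≤
      ∑ S ∈ X.powerset, p ^ S.card * (1 - p) ^ (X.card - S.card) * f (S ∪ T) := by
    intro T
    have := fmv_aux p hp0 hp1 X (fun S => f (S ∪ T)) (by
      intro S S'
      have h := hsub (S ∪ T) (S' ∪ T)
      rw [← Finset.union_union_distrib_right, ← Finset.inter_union_distrib_right] at h
      exact h)
    have h0 := mul_nonneg hq0 (hf0 (∅ ∪ T))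
    linarith
  have hout := fmv_aux (1 - p) hq0 (by linarith) Xᶜ (fun T => p * f (X ∪ T)) (by
      intro S S'
      have h := hsub (X ∪ S) (X ∪ S')
      rw [← Finset.union_union_distrib_left, ← Finset.union_inter_distrib_left] at h
      have := mul_le_mul_of_nonneg_left h hp0
      linarith)
  have h0 := mul_nonneg hq0 (mul_nonneg hp0 (hf0 (X ∪ Xᶜ)))
  simp only [Finset.union_empty] at hout
  calc p * p * f X ≤ _ := by linarith
    _ ≤ _ := hout
    _ ≤ _ := Finset.sum_le_sum fun T _ => mul_le_mul_of_nonneg_left (hin T)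
        (mul_nonneg (pow_nonneg hq0 _) (pow_nonneg (by linarith) _))

/-- **Submodular functions are noise-stable (uniform distribution).**
For a non-negative submodular `f : 2^[n] → ℝ` and `ρ ∈ [0,1]`,
`Stab_ρ(f) ≥ ρ · ‖f‖₂²`, where `Stab_ρ(f) = 2^{-n} Σ_X f(X) · T_ρ f(X)`,
`T_ρ f(X) = Σ_Y ((1+ρ)/2)^{n−|X Δ Y|} ((1−ρ)/2)^{|X Δ Y|} f(Y)`, and
`‖f‖₂² = 2^{-n} Σ_X f(X)²`. -/
theorem submodular_noise_stability_uniform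
    (n : ℕ) (f : Finset (Fin n) → ℝ) (hf0 : ∀ S, 0 ≤ f S)
    (hsub : ∀ S T : Finset (Fin n), f (S ∪ T) + f (S ∩ T) ≤ f S + f T)
    (ρ : ℝ) (hρ : ρ ∈ Set.Icc (0 : ℝ) 1) :
    ρ * (((2 : ℝ) ^ n)⁻¹ * ∑ X : Finset (Fin n), (f X) ^ 2)
      ≤ ((2 : ℝ) ^ n)⁻¹ *
          ∑ X : Finset (Fin n),
            f X *
              ∑ Y : Finset (Fin n),
                ((1 + ρ) / 2) ^ (n - (symmDiff X Y).card) *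
                  ((1 - ρ) / 2) ^ ((symmDiff X Y).card) * f Y := by

  obtain ⟨h0, h1⟩ := hρ
  rw [mul_left_comm, Finset.mul_sum]
  refine mul_le_mul_of_nonneg_left (Finset.sum_le_sum fun X _ => ?_) (by positivity)
  have h := pointwise_aux f hf0 hsub ((1 + ρ) / 2) (by linarith) (by linarith) X
  rw [show 1 - (1 + ρ) / 2 = (1 - ρ) / 2 by ring] at h
  have h2 : ρ * f X ≤ (1 + ρ) / 2 * ((1 + ρ) / 2) * f X :=
    mul_le_mul_of_nonneg_right (by nlinarith [sq_nonneg (1 - ρ)]) (hf0 X)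
  have h3 := mul_le_mul_of_nonneg_left (h2.trans h) (hf0 X)
  calc ρ * f X ^ 2 = f X * (ρ * f X) := by ring
    _ ≤ _ := h3
end

section
/- Let f : 2^[n] → ℝ be a submodular function (not necessarily non-negative). Then for every subset X ⊆ [n] and every ρ ∈ [0,1], the uniform-noise operator satisfies T_ρf(X) ≥ ρ·f(X) + ((1−ρ)/2)·(f(∅) + f([n])). -/
theorem noise_aux {α : Type*} [DecidableEq α] (p q : ℝ) (hp : 0 ≤ p) (hq : 0 ≤ q)
    (hpq : p + q = 1) (g : Finset α → ℝ)
    (hsub : ∀ S T : Finset α, g (S ∪ T) + g (S ∩ T) ≤ g S + g T) (A : Finset α) :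
    p * g A + q * g ∅ ≤ ∑ S ∈ A.powerset, p ^ S.card * q ^ (A.card - S.card) * g S := by
  induction A using Finset.induction_on with
  | empty =>
    simp
    rw [← add_mul, hpq, one_mul]
  | insert a A ha ih =>
    rw [Finset.sum_powerset_insert ha, ← Finset.sum_add_distrib]
    have h1 : ∑ S ∈ A.powerset, p ^ S.card * q ^ (A.card - S.card) *
        (g S + p * (g (insert a A) - g A)) ≤
        ∑ S ∈ A.powerset, (p ^ S.card * q ^ ((insert a A).card - S.card) * g S +
          p ^ (insert a S).card * q ^ ((insert a A).card - (insert a S).card) *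
            g (insert a S)) := by
      apply Finset.sum_le_sum
      intro S hS
      have hSA := Finset.mem_powerset.1 hS
      have haS : a ∉ S := fun h => ha (hSA h)
      have hc := Finset.card_le_card hSA
      rw [Finset.card_insert_of_notMem ha, Finset.card_insert_of_notMem haS,
        Nat.add_sub_add_right, Nat.sub_add_comm hc, pow_succ, pow_succ]
      have hs := hsub (insert a S) A
      have e1 : insert a S ∪ A = insert a A := by
        rw [Finset.insert_union, Finset.union_eq_right.2 hSA]
      have e2 : insert a S ∩ A = S := by
        rw [Finset.insert_inter_of_notMem ha, Finset.inter_eq_left.2 hSA]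
      rw [e1, e2] at hs
      have hw : 0 ≤ p ^ S.card * q ^ (A.card - S.card) := by positivity
      have h2 : g S + p * (g (insert a A) - g A) ≤ q * g S + p * g (insert a S) := by
        have : q = 1 - p := by linarith
        subst this
        nlinarith
      calc _ ≤ _ := mul_le_mul_of_nonneg_left h2 hw
        _ = _ := by ring
    refine le_trans ?_ h1
    simp only [mul_add, Finset.sum_add_distrib]
    rw [← Finset.sum_mul, Finset.sum_pow_mul_eq_add_pow, hpq, one_pow]
    linarith

/-- **Pointwise noise bound for submodular functions (uniform noise).**
For a (not necessarily non-negative) submodular `f : 2^[n] → ℝ`, every `X ⊆ [n]`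
and `ρ ∈ [0,1]`,
`T_ρ f(X) ≥ ρ·f(X) + ((1−ρ)/2)·(f(∅) + f([n]))`, where
`T_ρ f(X) = Σ_Y ((1+ρ)/2)^{n−|X Δ Y|} ((1−ρ)/2)^{|X Δ Y|} f(Y)`. -/
theorem submodular_noise_operator_lower_bound_uniform
    (n : ℕ) (f : Finset (Fin n) → ℝ)
    (hsub : ∀ S T : Finset (Fin n), f (S ∪ T) + f (S ∩ T) ≤ f S + f T)
    (X : Finset (Fin n)) (ρ : ℝ) (hρ : ρ ∈ Set.Icc (0 : ℝ) 1) :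
    ρ * f X + ((1 - ρ) / 2) * (f ∅ + f Finset.univ)
      ≤ ∑ Y : Finset (Fin n),
          ((1 + ρ) / 2) ^ (n - (symmDiff X Y).card) *
            ((1 - ρ) / 2) ^ ((symmDiff X Y).card) * f Y := by
  obtain ⟨h0, h1⟩ := hρ
  set p := (1 + ρ) / 2 with hpd
  set q := (1 - ρ) / 2 with hqd
  have hp : 0 ≤ p := by rw [hpd]; linarith
  have hq : 0 ≤ q := by rw [hqd]; linarith
  have hpq : p + q = 1 := by rw [hpd, hqd]; ring
  have hqp : q + p = 1 := by linarith
  have hρ' : ρ = p - q := by rw [hpd, hqd]; ring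
  have A1 := noise_aux p q hp hq hpq f hsub X
  have A2 := noise_aux q p hq hp hqp (fun T => f (X ∪ T)) (by
    intro S T
    have := hsub (X ∪ S) (X ∪ T)
    rw [← Finset.union_union_distrib_left, ← Finset.union_inter_distrib_left] at this
    exact this) Xᶜ
  simp only [Finset.union_compl, Finset.union_empty] at A2
  have W1 := Finset.sum_pow_mul_eq_add_pow p q X
  have W2 := Finset.sum_pow_mul_eq_add_pow q p Xᶜ
  rw [hpq, one_pow] at W1
  rw [hqp, one_pow] at W2
  have key : ∑ Y : Finset (Fin n), p ^ (n - (symmDiff X Y).card) *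
      q ^ ((symmDiff X Y).card) * f Y =
      ∑ z ∈ X.powerset ×ˢ Xᶜ.powerset,
        (p ^ z.1.card * q ^ (X.card - z.1.card)) *
          (q ^ z.2.card * p ^ (Xᶜ.card - z.2.card)) * f (z.1 ∪ z.2) := by
    refine Finset.sum_bij' (fun Y _ => (X ∩ Y, Xᶜ ∩ Y)) (fun z _ => z.1 ∪ z.2)
      ?_ ?_ ?_ ?_ ?_
    · intro Y _
      simp
    · intro z _
      simp
    · intro Y _
      ext i
      simp
      tauto
    · rintro ⟨S, T⟩ hz
      simp only [Finset.mem_product, Finset.mem_powerset] at hz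
      obtain ⟨hS, hT⟩ := hz
      ext i
      · have := @hS i
        have := @hT i
        simp at *
        tauto
      · have := @hS i
        have := @hT i
        simp at *
        tauto
    · intro Y _
      have hu : X ∩ Y ∪ Xᶜ ∩ Y = Y := by
        ext i
        simp
        tauto
      have hsd : symmDiff X Y = (X \ Y) ∪ (Xᶜ ∩ Y) := by
        ext i
        simp [Finset.mem_symmDiff]
        tauto
      have hdj : Disjoint (X \ Y) (Xᶜ ∩ Y) := by
        rw [Finset.disjoint_left]
        intro i
        simp
        tauto
      have c1 : (symmDiff X Y).card = (X \ Y).card + (Xᶜ ∩ Y).card := by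
        rw [hsd, Finset.card_union_of_disjoint hdj]
      have c2 := Finset.card_sdiff_add_card_inter X Y
      have c3 := Finset.card_add_card_compl X
      rw [Fintype.card_fin] at c3
      have c4 : (Xᶜ ∩ Y).card ≤ Xᶜ.card := Finset.card_le_card Finset.inter_subset_left
      simp only [hu]
      have e1 : n - (symmDiff X Y).card = (X ∩ Y).card + (Xᶜ.card - (Xᶜ ∩ Y).card) := by
        omega
      have e2 : (symmDiff X Y).card = (X.card - (X ∩ Y).card) + (Xᶜ ∩ Y).card := by
        omega
      rw [e1, e2, pow_add, pow_add]
      ring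
  rw [key, Finset.sum_product]
  have low : ∑ S ∈ X.powerset, ∑ T ∈ Xᶜ.powerset,
      ((p ^ S.card * q ^ (X.card - S.card) * f S) *
          (q ^ T.card * p ^ (Xᶜ.card - T.card)) +
        (p ^ S.card * q ^ (X.card - S.card)) *
          (q ^ T.card * p ^ (Xᶜ.card - T.card) * f (X ∪ T)) -
        (p ^ S.card * q ^ (X.card - S.card)) *
          (q ^ T.card * p ^ (Xᶜ.card - T.card)) * f X) ≤
      ∑ S ∈ X.powerset, ∑ T ∈ Xᶜ.powerset,
        (p ^ S.card * q ^ (X.card - S.card)) *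
          (q ^ T.card * p ^ (Xᶜ.card - T.card)) * f (S ∪ T) := by
    refine Finset.sum_le_sum fun S hS => Finset.sum_le_sum fun T hT => ?_
    rw [Finset.mem_powerset] at hS hT
    have hs := hsub (S ∪ T) X
    have e1 : S ∪ T ∪ X = X ∪ T := by
      ext i
      have := @hS i
      simp
      tauto
    have e2 : (S ∪ T) ∩ X = S := by
      ext i
      have := @hS i
      have := @hT i
      simp at *
      tauto
    rw [e1, e2] at hs
    have hw : 0 ≤ (p ^ S.card * q ^ (X.card - S.card)) *
          (q ^ T.card * p ^ (Xᶜ.card - T.card)) := by positivity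
    have h2 : f S + f (X ∪ T) - f X ≤ f (S ∪ T) := by linarith
    calc _ = _ := by ring
      _ ≤ _ := mul_le_mul_of_nonneg_left h2 hw
  refine le_trans ?_ low
  simp only [Finset.sum_sub_distrib, Finset.sum_add_distrib, ← Finset.mul_sum,
    ← Finset.sum_mul, W1, W2]
  have hfin : ρ * f X = p * f X + p * f X - f X := by
    have : ρ = p + p - 1 := by linarith
    rw [this]; ring
  linarith
end

section
/- Let f : 2^[n] → ℝ be a non-negative submodular function. Then for every subset X ⊆ [n] and every ρ ∈ [0,1], the uniform-noise operator satisfies T_ρf(X) ≥ ρ·f(X). -/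
lemma one_sided_bound {α : Type*} [DecidableEq α] (h : Finset α → ℝ)
    (hsub : ∀ S T : Finset α, h (S ∪ T) + h (S ∩ T) ≤ h S + h T)
    (p q : ℝ) (hp : 0 ≤ p) (hq : 0 ≤ q) (hpq : p + q = 1) (D : Finset α) :
    p * h ∅ + q * h D ≤ ∑ A ∈ D.powerset, p ^ (D.card - A.card) * q ^ A.card * h A := by
  induction D using Finset.induction_on with
  | empty => simp [← add_mul, hpq]
  | insert a D ha ih =>
    rw [Finset.sum_powerset_insert ha, ← Finset.sum_add_distrib]
    have hw : ∑ A ∈ D.powerset, p ^ (D.card - A.card) * q ^ A.card = 1 := by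
      have := Finset.sum_pow_mul_eq_add_pow q p D
      rw [add_comm q p, hpq, one_pow] at this
      rw [← this]
      exact Finset.sum_congr rfl fun A _ => mul_comm _ _
    have key : ∑ A ∈ D.powerset, (p ^ (D.card - A.card) * q ^ A.card * h A
          + (p ^ (D.card - A.card) * q ^ A.card) * (q * (h (insert a D) - h D)))
        ≤ ∑ A ∈ D.powerset, (p ^ ((insert a D).card - A.card) * q ^ A.card * h A
          + p ^ ((insert a D).card - (insert a A).card) * q ^ (insert a A).card
            * h (insert a A)) := by
      apply Finset.sum_le_sum
      intro A hA
      rw [Finset.mem_powerset] at hA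
      have haA : a ∉ A := fun h => ha (hA h)
      have hc := Finset.card_le_card hA
      rw [Finset.card_insert_of_notMem ha, Finset.card_insert_of_notMem haA,
        Nat.add_sub_add_right, Nat.sub_add_comm hc, pow_succ, pow_succ]
      have h1 := hsub (insert a A) D
      have e1 : insert a A ∪ D = insert a D := by
        rw [Finset.insert_union, Finset.union_eq_right.2 hA]
      have e2 : insert a A ∩ D = A := by
        rw [Finset.insert_inter_of_notMem ha, Finset.inter_eq_left.2 hA]
      rw [e1, e2] at h1
      have hW : 0 ≤ p ^ (D.card - A.card) * q ^ A.card := by positivity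
      have h2 : 0 ≤ (p ^ (D.card - A.card) * q ^ A.card) * q
          * (h (insert a A) + h D - h (insert a D) - h A) :=
        mul_nonneg (mul_nonneg hW hq) (by linarith)
      obtain rfl : p = 1 - q := by linarith
      linarith
    rw [Finset.sum_add_distrib, ← Finset.sum_mul, hw] at key
    linarith

/-- **Pointwise noise bound for non-negative submodular functions (uniform noise).**
For a non-negative submodular `f : 2^[n] → ℝ`, every `X ⊆ [n]` and `ρ ∈ [0,1]`,
`T_ρ f(X) ≥ ρ·f(X)`, where
`T_ρ f(X) = Σ_Y ((1+ρ)/2)^{n−|X Δ Y|} ((1−ρ)/2)^{|X Δ Y|} f(Y)`. -/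
theorem nonneg_submodular_noise_operator_lower_bound_uniform
    (n : ℕ) (f : Finset (Fin n) → ℝ) (hf0 : ∀ S, 0 ≤ f S)
    (hsub : ∀ S T : Finset (Fin n), f (S ∪ T) + f (S ∩ T) ≤ f S + f T)
    (X : Finset (Fin n)) (ρ : ℝ) (hρ : ρ ∈ Set.Icc (0 : ℝ) 1) :
    ρ * f X
      ≤ ∑ Y : Finset (Fin n),
          ((1 + ρ) / 2) ^ (n - (symmDiff X Y).card) *
            ((1 - ρ) / 2) ^ ((symmDiff X Y).card) * f Y := by
  obtain ⟨h0, h1⟩ := hρ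
  set p := (1 + ρ) / 2 with hp
  set q := (1 - ρ) / 2 with hq
  have hp0 : 0 ≤ p := by linarith
  have hq0 : 0 ≤ q := by linarith
  have hpq : p + q = 1 := by linarith
  have inner : ∀ B : Finset (Fin n), p * f (X ∪ B) ≤
      ∑ A ∈ X.powerset, p ^ (X.card - A.card) * q ^ A.card * f ((X ∪ B) \ A) := by
    intro B
    have := one_sided_bound (fun A => f ((X ∪ B) \ A)) (fun S T => by
      have := hsub ((X ∪ B) \ S) ((X ∪ B) \ T)
      have e1 : (X ∪ B) \ S ∪ (X ∪ B) \ T = (X ∪ B) \ (S ∩ T) := by ext x; simp; tauto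
      have e2 : (X ∪ B) \ S ∩ ((X ∪ B) \ T) = (X ∪ B) \ (S ∪ T) := by ext x; simp; tauto
      rw [e1, e2] at this
      linarith) p q hp0 hq0 hpq X
    have h3 := mul_nonneg hq0 (hf0 ((X ∪ B) \ X))
    simp only [Finset.sdiff_empty] at this
    linarith
  have outer : p * f X ≤
      ∑ B ∈ Xᶜ.powerset, p ^ (Xᶜ.card - B.card) * q ^ B.card * f (X ∪ B) := by
    have := one_sided_bound (fun B => f (X ∪ B)) (fun S T => by
      have := hsub (X ∪ S) (X ∪ T)
      rw [← Finset.union_union_distrib_left, ← Finset.union_inter_distrib_left] at this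
      exact this) p q hp0 hq0 hpq Xᶜ
    have h3 := mul_nonneg hq0 (hf0 (X ∪ Xᶜ))
    simp only [Finset.union_empty] at this
    linarith
  have reindex : ∑ Y : Finset (Fin n), p ^ (n - (symmDiff X Y).card) *
            q ^ ((symmDiff X Y).card) * f Y
      = ∑ B ∈ Xᶜ.powerset, ∑ A ∈ X.powerset, (p ^ (Xᶜ.card - B.card) * q ^ B.card) *
          (p ^ (X.card - A.card) * q ^ A.card * f ((X ∪ B) \ A)) := by
    rw [← Finset.sum_product']
    refine Finset.sum_nbij' (fun Y => (Y \ X, X \ Y)) (fun c => (X ∪ c.1) \ c.2) ?_ ?_ ?_ ?_ ?_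
    · intro Y _
      simp only [Finset.mem_product, Finset.mem_powerset]
      exact ⟨fun x hx => by simp at hx ⊢; exact hx.2, Finset.sdiff_subset⟩
    · intro c _; exact Finset.mem_univ _
    · intro Y _
      ext x; simp; tauto
    · rintro ⟨B, A⟩ hc
      simp only [Finset.mem_product, Finset.mem_powerset] at hc
      obtain ⟨hB, hA⟩ := hc
      refine Prod.ext ?_ ?_ <;> ext x <;> have b := @hB x <;> have a := @hA x <;>
        simp at a b ⊢ <;> tauto
    · intro Y _
      have e : (X ∪ Y \ X) \ (X \ Y) = Y := by ext x; simp; tauto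
      have hd : Disjoint (X \ Y) (Y \ X) := disjoint_sdiff_sdiff
      have ec : (symmDiff X Y).card = (X \ Y).card + (Y \ X).card := by
        rw [← Finset.card_union_of_disjoint hd]; rfl
      have l1 : (X \ Y).card ≤ X.card := Finset.card_le_card Finset.sdiff_subset
      have l2 : (Y \ X).card ≤ Xᶜ.card :=
        Finset.card_le_card (fun x hx => by simp at hx ⊢; exact hx.2)
      have l3 : X.card + Xᶜ.card = n := by simpa using Finset.card_add_card_compl X
      have en : n - (symmDiff X Y).card
          = (X.card - (X \ Y).card) + (Xᶜ.card - (Y \ X).card) := by omega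
      simp only [e]
      rw [en, ec, pow_add, pow_add]
      ring
  rw [reindex]
  calc ρ * f X ≤ p * (p * f X) := by
        have := mul_nonneg (sq_nonneg (1 - ρ)) (hf0 X)
        rw [hp]; nlinarith
    _ ≤ p * ∑ B ∈ Xᶜ.powerset, p ^ (Xᶜ.card - B.card) * q ^ B.card * f (X ∪ B) :=
        mul_le_mul_of_nonneg_left outer hp0
    _ = ∑ B ∈ Xᶜ.powerset, p ^ (Xᶜ.card - B.card) * q ^ B.card * (p * f (X ∪ B)) := by
        rw [Finset.mul_sum]; exact Finset.sum_congr rfl fun _ _ => by ring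
    _ ≤ _ := by
        apply Finset.sum_le_sum
        intro B _
        rw [← Finset.mul_sum]
        exact mul_le_mul_of_nonneg_left (inner B) (by positivity)
end

section
/- Let f : 2^[n] → ℝ be a non-negative submodular function with ‖f‖₂² = 2^{-n} Σ_{X⊆[n]} f(X)² = 1, and let ρ ∈ (0,1). Then, with respect to the uniform distribution over subsets of [n], there exists a multilinear polynomial p of degree at most 2/(1−ρ), i.e. a function of the form p(X) = Σ_{S⊆[n], |S| ≤ 2/(1−ρ)} c_S · ∏_{i∈S} x_i (where x_i = 1 if i ∈ X and x_i = −1 otherwise, and c_S ∈ ℝ), such that 2^{-n} Σ_{X⊆[n]} (f(X) − p(X))² ≤ (1−ρ)/(1 − e^{−2}). -/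
namespace SubmodAux

/-- The parity character. -/
noncomputable def chi {n : ℕ} (S X : Finset (Fin n)) : ℝ :=
  ∏ i ∈ S, (if i ∈ X then (1 : ℝ) else -1)

/-- The product weight of a set of flipped coordinates. -/
noncomputable def wt {n : ℕ} (p : ℝ) (T : Finset (Fin n)) : ℝ :=
  ∏ i, (if i ∈ T then p else 1 - p)

/-- The Fourier coefficient. -/
noncomputable def fhat {n : ℕ} (f : Finset (Fin n) → ℝ) (S : Finset (Fin n)) : ℝ :=
  ((2 : ℝ) ^ n)⁻¹ * ∑ X, f X * chi S X

lemma noise_lower {n : ℕ} (f : Finset (Fin n) → ℝ)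
    (hsub : ∀ S T : Finset (Fin n), f (S ∪ T) + f (S ∩ T) ≤ f S + f T)
    (p : ℝ) (hp0 : 0 ≤ p) (hp1 : p ≤ 1) (A : Finset (Fin n)) :
    ∀ X : Finset (Fin n),
      (1 - p) ^ 2 * f X + (1 - p) * p * f (X \ A) + p * (1 - p) * f (X ∪ A)
        + p ^ 2 * f (symmDiff X A)
      ≤ ∑ T ∈ A.powerset, (∏ i ∈ A, (if i ∈ T then p else 1 - p)) * f (symmDiff X T) := by
  induction A using Finset.induction_on with
  | empty =>
    intro X
    have h : symmDiff X ∅ = X := by ext; simp [Finset.mem_symmDiff]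
    simp [h]
    nlinarith
  | insert a A ha ih =>
    intro X
    rw [Finset.sum_powerset_insert ha]
    have e1 : ∑ T ∈ A.powerset, (∏ i ∈ insert a A, (if i ∈ T then p else 1 - p)) * f (symmDiff X T)
        = (1 - p) * ∑ T ∈ A.powerset, (∏ i ∈ A, (if i ∈ T then p else 1 - p)) * f (symmDiff X T) := by
      rw [Finset.mul_sum]
      refine Finset.sum_congr rfl fun T hT => ?_
      have : a ∉ T := fun h => ha (Finset.mem_powerset.1 hT h)
      rw [Finset.prod_insert ha, if_neg this, mul_assoc]
    have e2 : ∑ T ∈ A.powerset, (∏ i ∈ insert a A, (if i ∈ insert a T then p else 1 - p))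
          * f (symmDiff X (insert a T))
        = p * ∑ T ∈ A.powerset, (∏ i ∈ A, (if i ∈ T then p else 1 - p))
          * f (symmDiff (symmDiff X {a}) T) := by
      rw [Finset.mul_sum]
      refine Finset.sum_congr rfl fun T hT => ?_
      have haT : a ∉ T := fun h => ha (Finset.mem_powerset.1 hT h)
      rw [Finset.prod_insert ha, if_pos (Finset.mem_insert_self a T), mul_assoc]
      have h1 : symmDiff X (insert a T) = symmDiff (symmDiff X {a}) T := by
        ext i
        by_cases hi : i = a
        · subst hi; simp [Finset.mem_symmDiff, haT]
        · simp [Finset.mem_symmDiff, hi]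
      rw [h1]
      congr 2
      refine Finset.prod_congr rfl fun i hi => ?_
      have : i ≠ a := fun h => ha (h ▸ hi)
      simp [this]
    rw [e1, e2]
    have i1 := mul_le_mul_of_nonneg_left (ih X) (sub_nonneg.2 hp1)
    have i2 := mul_le_mul_of_nonneg_left (ih (symmDiff X {a})) hp0
    refine le_trans ?_ (add_le_add i1 i2)
    have w1 : 0 ≤ p * (1 - p) ^ 2 := by positivity
    have w2 : 0 ≤ p ^ 2 * (1 - p) := mul_nonneg (by positivity) (sub_nonneg.2 hp1)
    by_cases haX : a ∈ X
    · have k1 := hsub (X \ A) (symmDiff X {a})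
      have k2 := hsub (symmDiff X A) (symmDiff X {a} ∪ A)
      have q1 : (X \ A) ∪ symmDiff X {a} = X := by
        ext i; by_cases hi : i = a
        · subst hi; simp [Finset.mem_symmDiff, ha, haX]
        · simp [Finset.mem_symmDiff, hi]; try tauto
      have q2 : (X \ A) ∩ symmDiff X {a} = X \ insert a A := by
        ext i; by_cases hi : i = a
        · subst hi; simp [Finset.mem_symmDiff, ha, haX]
        · simp [Finset.mem_symmDiff, hi]; try tauto
      have q3 : symmDiff X A ∪ (symmDiff X {a} ∪ A) = X ∪ A := by
        ext i; by_cases hi : i = a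
        · subst hi; simp [Finset.mem_symmDiff, ha, haX]
        · simp [Finset.mem_symmDiff, hi]; try tauto
      have q4 : symmDiff X A ∩ (symmDiff X {a} ∪ A) = symmDiff X (insert a A) := by
        ext i; by_cases hi : i = a
        · subst hi; simp [Finset.mem_symmDiff, ha, haX]
        · simp [Finset.mem_symmDiff, hi]; try tauto
      have q5 : symmDiff X {a} \ A = X \ insert a A := by
        ext i; by_cases hi : i = a
        · subst hi; simp [Finset.mem_symmDiff, ha, haX]
        · simp [Finset.mem_symmDiff, hi]; try tauto
      have q6 : X ∪ insert a A = X ∪ A := by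
        ext i; by_cases hi : i = a
        · subst hi; simp [ha, haX]
        · simp [hi]
      have q7 : symmDiff (symmDiff X {a}) A = symmDiff X (insert a A) := by
        ext i; by_cases hi : i = a
        · subst hi; simp [Finset.mem_symmDiff, ha, haX]
        · simp [Finset.mem_symmDiff, hi]; try tauto
      rw [q1, q2] at k1
      rw [q3, q4] at k2
      rw [q5, q6, q7]
      have m1 := mul_le_mul_of_nonneg_left k1 w1
      have m2 := mul_le_mul_of_nonneg_left k2 w2
      linarith
    · have k1 := hsub (X ∪ A) (symmDiff X {a})
      have k2 := hsub (symmDiff X A) (symmDiff X {a} \ A)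
      have q1 : (X ∪ A) ∪ symmDiff X {a} = X ∪ insert a A := by
        ext i; by_cases hi : i = a
        · subst hi; simp [Finset.mem_symmDiff, ha, haX]
        · simp [Finset.mem_symmDiff, hi]; try tauto
      have q2 : (X ∪ A) ∩ symmDiff X {a} = X := by
        ext i; by_cases hi : i = a
        · subst hi; simp [ha, haX]
        · simp [Finset.mem_symmDiff, hi]; try tauto
      have q3 : symmDiff X A ∪ (symmDiff X {a} \ A) = symmDiff X (insert a A) := by
        ext i; by_cases hi : i = a
        · subst hi; simp [Finset.mem_symmDiff, ha, haX]
        · simp [Finset.mem_symmDiff, hi]; try tauto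
      have q4 : symmDiff X A ∩ (symmDiff X {a} \ A) = X \ A := by
        ext i; by_cases hi : i = a
        · subst hi; simp [Finset.mem_symmDiff, ha, haX]
        · simp [Finset.mem_symmDiff, hi]; try tauto
      have q5 : symmDiff X {a} ∪ A = X ∪ insert a A := by
        ext i; by_cases hi : i = a
        · subst hi; simp [Finset.mem_symmDiff, ha, haX]
        · simp [Finset.mem_symmDiff, hi]; try tauto
      have q6 : X \ insert a A = X \ A := by
        ext i; by_cases hi : i = a
        · subst hi; simp [ha, haX]
        · simp [hi]
      have q7 : symmDiff (symmDiff X {a}) A = symmDiff X (insert a A) := by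
        ext i; by_cases hi : i = a
        · subst hi; simp [Finset.mem_symmDiff, ha, haX]
        · simp [Finset.mem_symmDiff, hi]; try tauto
      rw [q1, q2] at k1
      rw [q3, q4] at k2
      rw [q5, q6, q7]
      have m1 := mul_le_mul_of_nonneg_left k1 w1
      have m2 := mul_le_mul_of_nonneg_left k2 w2
      linarith

lemma noise_lower' {n : ℕ} (f : Finset (Fin n) → ℝ) (hf0 : ∀ S, 0 ≤ f S)
    (hsub : ∀ S T : Finset (Fin n), f (S ∪ T) + f (S ∩ T) ≤ f S + f T)
    (p : ℝ) (hp0 : 0 ≤ p) (hp1 : p ≤ 1) (X : Finset (Fin n)) :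
    (1 - p) ^ 2 * f X ≤ ∑ Y, wt p (symmDiff X Y) * f Y := by
  have h := noise_lower f hsub p hp0 hp1 Finset.univ X
  have e : ∑ Y, wt p (symmDiff X Y) * f Y = ∑ T, wt p T * f (symmDiff X T) := by
    refine Fintype.sum_equiv (symmDiff_right_involutive X).toPerm _ _ fun Y => ?_
    simp
  rw [Finset.powerset_univ] at h
  rw [e]
  refine le_trans ?_ h
  have hq := sub_nonneg.2 hp1
  have a1 := mul_nonneg (mul_nonneg hq hp0) (hf0 (X \ Finset.univ))
  have a2 := mul_nonneg (mul_nonneg hp0 hq) (hf0 (X ∪ Finset.univ))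
  have a3 := mul_nonneg (pow_nonneg hp0 2) (hf0 (symmDiff X Finset.univ))
  linarith

lemma wt_eq {n : ℕ} (r : ℝ) (X Y : Finset (Fin n)) :
    wt ((1 - r) / 2) (symmDiff X Y)
      = ((2 : ℝ) ^ n)⁻¹ * ∑ S, r ^ S.card * (chi S X * chi S Y) := by
  have h : ∏ i : Fin n, ((r * ((if i ∈ X then (1 : ℝ) else -1) * (if i ∈ Y then (1 : ℝ) else -1))) + 1)
      = ∑ S : Finset (Fin n), r ^ S.card * (chi S X * chi S Y) := by
    rw [Finset.prod_add, Finset.powerset_univ]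
    refine Finset.sum_congr rfl fun S _ => ?_
    simp only [chi, Finset.prod_mul_distrib, Finset.prod_const, one_pow, mul_one]
  rw [← h, wt]
  have h2 : ((2 : ℝ) ^ n)⁻¹ = ∏ i : Fin n, (2 : ℝ)⁻¹ := by simp
  rw [h2, ← Finset.prod_mul_distrib]
  refine Finset.prod_congr rfl fun i _ => ?_
  by_cases hx : i ∈ X <;> by_cases hy : i ∈ Y <;> simp [Finset.mem_symmDiff, hx, hy] <;> ring

lemma stab {n : ℕ} (f : Finset (Fin n) → ℝ) (r : ℝ) :
    ((2 : ℝ) ^ n)⁻¹ * ∑ X, f X * ∑ Y, wt ((1 - r) / 2) (symmDiff X Y) * f Y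
      = ∑ S, r ^ S.card * fhat f S ^ 2 := by
  have hR : ∀ S, r ^ S.card * fhat f S ^ 2 = ((2 : ℝ) ^ n)⁻¹ * ∑ X, ∑ Y,
      (((2 : ℝ) ^ n)⁻¹ * (r ^ S.card * (chi S X * chi S Y) * (f X * f Y))) := by
    intro S
    rw [fhat, mul_pow, pow_two (∑ X, f X * chi S X), Finset.sum_mul_sum]
    simp only [Finset.mul_sum]
    refine Finset.sum_congr rfl fun X _ => Finset.sum_congr rfl fun Y _ => ?_
    ring
  simp only [hR]
  rw [← Finset.mul_sum]
  congr 1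
  rw [Finset.sum_comm]
  refine Finset.sum_congr rfl fun X _ => ?_
  rw [Finset.sum_comm, Finset.mul_sum]
  refine Finset.sum_congr rfl fun Y _ => ?_
  rw [wt_eq, ← Finset.mul_sum, ← Finset.sum_mul]
  ring

lemma wt_zero {n : ℕ} (T : Finset (Fin n)) : wt 0 T = if T = ∅ then 1 else 0 := by
  split_ifs with h
  · simp [wt, h]
  · obtain ⟨i, hi⟩ := Finset.nonempty_iff_ne_empty.2 h
    exact Finset.prod_eq_zero (Finset.mem_univ i) (by simp [hi])

lemma parseval {n : ℕ} (f : Finset (Fin n) → ℝ) :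
    ((2 : ℝ) ^ n)⁻¹ * ∑ X, f X ^ 2 = ∑ S, fhat f S ^ 2 := by
  have h := stab f 1
  simp only [sub_self, zero_div, one_pow, one_mul, wt_zero] at h
  rw [← h]
  congr 1
  refine Finset.sum_congr rfl fun X _ => ?_
  have : ∀ Y, symmDiff X Y = ∅ ↔ X = Y := fun Y => by
    rw [← Finset.bot_eq_empty, symmDiff_eq_bot]
  simp [this, pow_two]

lemma orth {n : ℕ} (S T : Finset (Fin n)) :
    ∑ X, chi S X * chi T X = if S = T then (2 : ℝ) ^ n else 0 := by
  have h : ∏ i : Fin n, ((1 : ℝ) + (if i ∈ S then (-1 : ℝ) else 1) * (if i ∈ T then (-1 : ℝ) else 1))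
      = ∑ X, chi S X * chi T X := by
    rw [Finset.prod_add, Finset.powerset_univ]
    refine Finset.sum_congr rfl fun X _ => ?_
    have hc : ∀ S : Finset (Fin n), chi S X
        = ∏ i ∈ Finset.univ \ X, (if i ∈ S then (-1 : ℝ) else 1) := by
      intro S
      have a1 : chi S X = ∏ i, (if i ∈ S then (if i ∈ X then (1 : ℝ) else -1) else 1) := by
        rw [Finset.prod_ite_mem]; simp [chi]
      rw [a1, ← Finset.prod_subset (Finset.subset_univ (Finset.univ \ X))]
      · refine Finset.prod_congr rfl fun i hi => ?_
        simp at hi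
        simp [hi]
      · intro i _ hi
        simp at hi
        simp [hi]
    rw [hc S, hc T, Finset.prod_mul_distrib]
    simp
  rw [← h]
  split_ifs with hST
  · subst hST
    have : ∀ i : Fin n, ((1 : ℝ) + (if i ∈ S then (-1 : ℝ) else 1) * (if i ∈ S then (-1 : ℝ) else 1)) = 2 := by
      intro i; split_ifs <;> norm_num
    rw [Finset.prod_congr rfl fun i _ => this i]
    simp
  · have : ∃ i, ¬ (i ∈ S ↔ i ∈ T) := by
      by_contra hc
      push Not at hc
      exact hST (Finset.ext hc)
    obtain ⟨i, hi⟩ := this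
    refine Finset.prod_eq_zero (Finset.mem_univ i) ?_
    by_cases h1 : i ∈ S <;> by_cases h2 : i ∈ T <;> simp_all

lemma fhat_sub {n : ℕ} (f c : Finset (Fin n) → ℝ) (T : Finset (Fin n)) :
    fhat (fun X => f X - ∑ S, c S * chi S X) T = fhat f T - c T := by
  have h : ∑ X, (∑ S, c S * chi S X) * chi T X = 2 ^ n * c T := by
    simp only [Finset.sum_mul]
    rw [Finset.sum_comm]
    simp only [mul_assoc, ← Finset.mul_sum, orth]
    simp [mul_comm]
  simp only [fhat, sub_mul, Finset.sum_sub_distrib, mul_sub, h]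
  congr 1
  rw [← mul_assoc, inv_mul_cancel₀ (by positivity), one_mul]

end SubmodAux

/-- **Non-negative submodular functions are approximated by low-degree polynomials
(uniform distribution).** Let `f : 2^[n] → ℝ` be non-negative submodular with
`‖f‖₂² = 2^{-n} Σ_X f(X)² = 1` and let `ρ ∈ (0,1)`. Then there is a multilinear
polynomial `p(X) = Σ_{|S| ≤ 2/(1−ρ)} c_S ∏_{i∈S} x_i` (with `x_i = ±1` according to
membership in `X`) such that `2^{-n} Σ_X (f(X) − p(X))² ≤ (1−ρ)/(1 − e^{−2})`. -/
theorem submodular_low_degree_approximation_uniform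
    (n : ℕ) (f : Finset (Fin n) → ℝ) (hf0 : ∀ S, 0 ≤ f S)
    (hsub : ∀ S T : Finset (Fin n), f (S ∪ T) + f (S ∩ T) ≤ f S + f T)
    (hnorm : ((2 : ℝ) ^ n)⁻¹ * ∑ X : Finset (Fin n), (f X) ^ 2 = 1)
    (ρ : ℝ) (hρ : ρ ∈ Set.Ioo (0 : ℝ) 1) :
    ∃ c : Finset (Fin n) → ℝ,
      (∀ S : Finset (Fin n), 2 / (1 - ρ) < (S.card : ℝ) → c S = 0) ∧
      ((2 : ℝ) ^ n)⁻¹ *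
          ∑ X : Finset (Fin n),
            (f X - ∑ S : Finset (Fin n),
              c S * ∏ i ∈ S, (if i ∈ X then (1 : ℝ) else -1)) ^ 2
        ≤ (1 - ρ) / (1 - Real.exp (-2)) := by
  obtain ⟨hr0, hr1⟩ := hρ
  have hd : 0 < 1 - ρ := by linarith
  have he : 0 < 1 - Real.exp (-2) := by
    have : Real.exp (-2) < 1 := by rw [← Real.exp_zero]; exact Real.exp_lt_exp.2 (by norm_num)
    linarith
  set c : Finset (Fin n) → ℝ := fun S =>
    if 2 / (1 - ρ) < (S.card : ℝ) then 0 else SubmodAux.fhat f S with hc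
  refine ⟨c, fun S hS => by simp only [hc]; rw [if_pos hS], ?_⟩
  have hp := SubmodAux.parseval (fun X => f X - ∑ S, c S * SubmodAux.chi S X)
  simp only [SubmodAux.fhat_sub] at hp
  simp only [SubmodAux.chi] at hp
  rw [hp, le_div_iff₀ he, Finset.sum_mul]
  have h1 : ∑ S, SubmodAux.fhat f S ^ 2 = 1 := by rw [← SubmodAux.parseval, hnorm]
  have h2 : ρ ≤ ∑ S, ρ ^ S.card * SubmodAux.fhat f S ^ 2 := by
    rw [← SubmodAux.stab]
    have : ρ = ((2 : ℝ) ^ n)⁻¹ * ∑ X, ρ * f X ^ 2 := by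
      rw [← Finset.mul_sum, mul_left_comm, hnorm, mul_one]
    refine this.le.trans ?_
    refine mul_le_mul_of_nonneg_left (Finset.sum_le_sum fun X _ => ?_) (by positivity)
    have h3 := SubmodAux.noise_lower' f hf0 hsub ((1 - ρ) / 2) (by linarith) (by linarith) X
    refine le_trans ?_ (mul_le_mul_of_nonneg_left h3 (hf0 X))
    have h4 : 0 ≤ ((1 - ρ) / 2) ^ 2 * f X ^ 2 := by positivity
    linarith
  have h5 : ∑ S, (1 - ρ ^ S.card) * SubmodAux.fhat f S ^ 2 ≤ 1 - ρ := by
    simp only [sub_mul, one_mul, Finset.sum_sub_distrib]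
    linarith
  refine le_trans (Finset.sum_le_sum fun S _ => ?_) h5
  by_cases hS : 2 / (1 - ρ) < (S.card : ℝ)
  · simp only [hc, if_pos hS, sub_zero]
    rw [mul_comm]
    refine mul_le_mul_of_nonneg_right ?_ (sq_nonneg _)
    have h6 : ρ ^ S.card ≤ Real.exp (-2) := by
      have h7 : ρ ≤ Real.exp (-(1 - ρ)) := by
        have := Real.add_one_le_exp (-(1 - ρ))
        linarith
      refine (pow_le_pow_left₀ hr0.le h7 _).trans ?_
      rw [← Real.exp_nat_mul, Real.exp_le_exp]
      rw [div_lt_iff₀ hd] at hS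
      linarith
    linarith
  · simp only [hc, if_neg hS, sub_self]
    have h8 : ρ ^ S.card ≤ 1 := pow_le_one₀ hr0.le hr1.le
    have h9 : 0 ≤ (1 - ρ ^ S.card) * SubmodAux.fhat f S ^ 2 :=
      mul_nonneg (by linarith) (sq_nonneg _)
    simpa using h9
end
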